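/- arXiv:2211.14186 — 12 statements merged into one kernel-verified Lean document; each statement's English description precedes it below -/
import Mathlib

section
/- Let (A, ∧, ∨, ·, e) be a commutative l-monoid, i.e., (A, ∧, ∨) is a lattice, (A, ·, e) is a commutative monoid and (a ∨ b) · c = (a · c) ∨ (b · c) for all a, b, c ∈ A. Let Q ⊆ A be a subset with e ∈ Q that is closed under ∧, ∨ and ·, and let → : A × A → A be an operation such that for all a, b ∈ A: a → b ∈ Q and, for all q ∈ Q, a · q ≤ b if and only if q ≤ a → b. Then the following identities hold for all x, y, z ∈ A: (1) e ≤ (x ∧ y) → y; (2) x → y ≤ (z ∧ e) → (x → y); (3) x · (x → y) ≤ y; (4) z → (x ∧ y) = (z → x) ∧ (z → y); (5) e → ((e → x) · (e → y)) = (e → x) · (e → y); (6) e → y ≤ x → (x · (e → y)). -/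
/-!
Since `arr a b` lies in `Q`, the residuation condition says that `arr a b` is the largest `q ∈ Q`
with `a * q ≤ b`. Each identity follows by testing this against a suitable element of `Q`;
the closure of `Q` under `1`, `⊓` and `*` supplies these elements, and monotonicity of the
product is needed only for the second identity.
-/

variable {A : Type*} [Lattice A] [CommMonoid A]

/-- An srl-monoid structure on a lattice-ordered commutative monoid, with arrow `arr`
and monoid unit `e = 1`. -/
structure IsSRL (arr : A → A → A) : Prop where
  mul_sup : ∀ a b c : A, (a ⊔ b) * c = (a * c) ⊔ (b * c)
  ax1 : ∀ x y : A, (1 : A) ≤ arr (x ⊓ y) y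
  ax2 : ∀ x y z : A, arr x y ≤ arr (z ⊓ 1) (arr x y)
  ax3 : ∀ x y : A, x * arr x y ≤ y
  ax4 : ∀ x y z : A, arr z (x ⊓ y) = arr z x ⊓ arr z y
  ax5 : ∀ x y : A, arr 1 (arr 1 x * arr 1 y) = arr 1 x * arr 1 y
  ax6 : ∀ x y : A, arr 1 y ≤ arr x (x * arr 1 y)

/-- A congruence of an srl-monoid: an equivalence relation compatible with ⊓, ⊔, · and →. -/
def IsCongruence (arr : A → A → A) (θ : A → A → Prop) : Prop :=
  Equivalence θ ∧
  (∀ a b c d : A, θ a b → θ c d → θ (a ⊓ c) (b ⊓ d)) ∧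
  (∀ a b c d : A, θ a b → θ c d → θ (a ⊔ c) (b ⊔ d)) ∧
  (∀ a b c d : A, θ a b → θ c d → θ (a * c) (b * d)) ∧
  (∀ a b c d : A, θ a b → θ c d → θ (arr a c) (arr b d))

/-- A convex subalgebra of an srl-monoid. -/
structure IsConvexSubalgebra (arr : A → A → A) (H : Set A) : Prop where
  one_mem : (1 : A) ∈ H
  inf_mem : ∀ a b : A, a ∈ H → b ∈ H → a ⊓ b ∈ H
  sup_mem : ∀ a b : A, a ∈ H → b ∈ H → a ⊔ b ∈ H
  mul_mem : ∀ a b : A, a ∈ H → b ∈ H → a * b ∈ H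
  arr_mem : ∀ a b : A, a ∈ H → b ∈ H → arr a b ∈ H
  convex : ∀ a b c : A, a ∈ H → b ∈ H → a ≤ c → c ≤ b → c ∈ H

/-- A strongly convex subalgebra of an srl-monoid. -/
structure IsStronglyConvexSubalgebra (arr : A → A → A) (H : Set A) : Prop where
  toConvex : IsConvexSubalgebra arr H
  strong : ∀ a h : A, h ∈ H → a * h ≤ 1 → 1 ≤ arr h a → a ∈ H

/-- `s(a,b) = (a→b) ⊓ (b→a) ⊓ e`. -/
def srlS (arr : A → A → A) (a b : A) : A := arr a b ⊓ arr b a ⊓ 1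

/-- `θ_H = {(a,b) : a·h ≤ b and b·h ≤ a for some h ∈ H}`. -/
def thetaH (H : Set A) (a b : A) : Prop := ∃ h ∈ H, a * h ≤ b ∧ b * h ≤ a

/-- Iterates of `□(a) = e → a`: `□⁰(a) = a`, `□¹(a) = □(a)`,
`□^{n+1}(a) = □(a) · □ⁿ(a)` for `n ≥ 1`. -/
def boxIter (arr : A → A → A) : ℕ → A → A
  | 0, a => a
  | 1, a => arr 1 a
  | n + 2, a => arr 1 a * boxIter arr (n + 1) a

/-- a subresiduated lattice-ordered commutative monoid, presented via a
subalgebra `Q` and a residuation-relative-to-`Q` operation `arr`, satisfies the six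
defining identities. -/
theorem stmt0 {A : Type*} [Lattice A] [CommMonoid A]
    (mul_sup : ∀ a b c : A, (a ⊔ b) * c = (a * c) ⊔ (b * c))
    (Q : Set A) (arr : A → A → A)
    (hQ1 : (1 : A) ∈ Q)
    (hQinf : ∀ a b : A, a ∈ Q → b ∈ Q → a ⊓ b ∈ Q)
    (hQsup : ∀ a b : A, a ∈ Q → b ∈ Q → a ⊔ b ∈ Q)
    (hQmul : ∀ a b : A, a ∈ Q → b ∈ Q → a * b ∈ Q)
    (harr : ∀ a b : A, arr a b ∈ Q)
    (hres : ∀ a b q : A, q ∈ Q → (a * q ≤ b ↔ q ≤ arr a b)) :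
    (∀ x y : A, (1 : A) ≤ arr (x ⊓ y) y) ∧
    (∀ x y z : A, arr x y ≤ arr (z ⊓ 1) (arr x y)) ∧
    (∀ x y : A, x * arr x y ≤ y) ∧
    (∀ x y z : A, arr z (x ⊓ y) = arr z x ⊓ arr z y) ∧
    (∀ x y : A, arr 1 (arr 1 x * arr 1 y) = arr 1 x * arr 1 y) ∧
    (∀ x y : A, arr 1 y ≤ arr x (x * arr 1 y)) := by
  -- Multiplication is monotone, since it distributes over joins.
  have mono : ∀ a b c : A, a ≤ b → a * c ≤ b * c := fun a b c h => by
    rw [← sup_eq_right, ← mul_sup, sup_eq_right.mpr h]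
  have mp : ∀ x y : A, x * arr x y ≤ y := fun x y => (hres x y _ (harr x y)).mpr le_rfl
  refine ⟨fun x y => ?_, fun x y z => ?_, mp, fun x y z => ?_, fun x y => ?_, fun x y => ?_⟩
  · rw [← hres _ _ _ hQ1, mul_one]
    exact inf_le_right
  · rw [← hres _ _ _ (harr x y)]
    simpa using mono (z ⊓ 1) 1 (arr x y) inf_le_right
  · -- The meet on the right lies in `Q`, so it may be tested in `hres` as well.
    apply le_antisymm
    · exact le_inf ((hres _ _ _ (harr _ _)).mp ((mp z (x ⊓ y)).trans inf_le_left))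
        ((hres _ _ _ (harr _ _)).mp ((mp z (x ⊓ y)).trans inf_le_right))
    · have hm := hQinf _ _ (harr z x) (harr z y)
      exact (hres _ _ _ hm).mp (le_inf ((hres _ _ _ hm).mpr inf_le_left)
        ((hres _ _ _ hm).mpr inf_le_right))
  · -- `arr 1` fixes every element of `Q`, and `Q` is closed under products.
    apply le_antisymm
    · simpa using mp 1 (arr 1 x * arr 1 y)
    · rw [← hres _ _ _ (hQmul _ _ (harr 1 x) (harr 1 y)), one_mul]
  · exact (hres _ _ _ (harr 1 y)).mp le_rfl
end

section
/- Let (A, ∧, ∨, ·, e) be a commutative l-monoid, i.e., (A, ∧, ∨) is a lattice, (A, ·, e) is a commutative monoid and (a ∨ b) · c = (a · c) ∨ (b · c) for all a, b, c ∈ A, and let → : A × A → A satisfy, for all x, y, z ∈ A: (1) e ≤ (x ∧ y) → y; (2) x → y ≤ (z ∧ e) → (x → y); (3) x · (x → y) ≤ y; (4) z → (x ∧ y) = (z → x) ∧ (z → y); (5) e → ((e → x) · (e → y)) = (e → x) · (e → y); (6) e → y ≤ x → (x · (e → y)). Define Q = {a ∈ A : e → a = a}. Then e ∈ Q, Q is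 closed under ∧, ∨ and ·, a → b ∈ Q for all a, b ∈ A, and for all a, b ∈ A and q ∈ Q: a · q ≤ b if and only if q ≤ a → b (so a → b = max{q ∈ Q : a · q ≤ b}). -/
/-!
Write `□a = 1 → a`, so that `Q` is the set of fixed points of `□`. Axiom (3) at `x = 1` gives
`□a ≤ a`, axiom (4) makes every `z → ·` monotone, and axiom (2) at `z = 1` shows that `□` fixes
each `a → b`. Thus `□` is an interior operator, whose fixed points are closed under joins;
closure under meets and products is (4) and (5). For residuation, if `q = □q` and `a * q ≤ b`,
then (6) and monotonicity give `q ≤ (a → a * q) ≤ (a → b)`; the converse follows from (3) and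
monotonicity of multiplication.
-/

variable {A : Type*} [Lattice A] [CommMonoid A]

/-- conversely, from the six identities one recovers the subalgebra
`Q = {a : e → a = a}` and the residuation property relative to `Q`
(so `a → b = max {q ∈ Q : a·q ≤ b}`). -/
theorem stmt1 {A : Type*} [Lattice A] [CommMonoid A]
    (mul_sup : ∀ a b c : A, (a ⊔ b) * c = (a * c) ⊔ (b * c))
    (arr : A → A → A)
    (ax1 : ∀ x y : A, (1 : A) ≤ arr (x ⊓ y) y)
    (ax2 : ∀ x y z : A, arr x y ≤ arr (z ⊓ 1) (arr x y))
    (ax3 : ∀ x y : A, x * arr x y ≤ y)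
    (ax4 : ∀ x y z : A, arr z (x ⊓ y) = arr z x ⊓ arr z y)
    (ax5 : ∀ x y : A, arr 1 (arr 1 x * arr 1 y) = arr 1 x * arr 1 y)
    (ax6 : ∀ x y : A, arr 1 y ≤ arr x (x * arr 1 y))
    (Q : Set A) (hQ : Q = {a : A | arr 1 a = a}) :
    (1 : A) ∈ Q ∧
    (∀ a b : A, a ∈ Q → b ∈ Q → a ⊓ b ∈ Q) ∧
    (∀ a b : A, a ∈ Q → b ∈ Q → a ⊔ b ∈ Q) ∧
    (∀ a b : A, a ∈ Q → b ∈ Q → a * b ∈ Q) ∧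
    (∀ a b : A, arr a b ∈ Q) ∧
    (∀ a b q : A, q ∈ Q → (a * q ≤ b ↔ q ≤ arr a b)) ∧
    (∀ a b : A, IsGreatest {q : A | q ∈ Q ∧ a * q ≤ b} (arr a b)) := by
  have box_le : ∀ a, arr 1 a ≤ a := fun a => by simpa using ax3 1 a
  have arr_mono : ∀ z x y : A, x ≤ y → arr z x ≤ arr z y := fun z x y h => by
    have h4 := ax4 x y z
    rw [inf_eq_left.2 h] at h4
    rw [h4]
    exact inf_le_right
  have mul_mono : ∀ a b c : A, a ≤ b → c * a ≤ c * b := fun a b c h => by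
    have hs := mul_sup a b c
    rw [sup_eq_right.2 h] at hs
    rw [mul_comm c a, mul_comm c b, hs]
    exact le_sup_left
  have arr_fixed : ∀ a b, arr 1 (arr a b) = arr a b := fun a b =>
    le_antisymm (box_le _) (by simpa using ax2 a b 1)
  have residuation : ∀ a b q : A, arr 1 q = q → (a * q ≤ b ↔ q ≤ arr a b) := by
    intro a b q hq
    constructor
    · intro h
      have h6 := ax6 a q
      rw [hq] at h6
      exact h6.trans (arr_mono _ _ _ h)
    · intro h
      exact (mul_mono _ _ a h).trans (ax3 a b)
  subst hQ
  simp only [Set.mem_ofPred_eq]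
  refine ⟨le_antisymm (box_le 1) (by simpa using ax1 1 1), ?_, ?_, ?_, arr_fixed, residuation, ?_⟩
  · intro a b ha hb
    rw [ax4, ha, hb]
  · intro a b ha hb
    refine le_antisymm (box_le _) (sup_le ?_ ?_)
    · exact ha.symm.le.trans (arr_mono _ _ _ le_sup_left)
    · exact hb.symm.le.trans (arr_mono _ _ _ le_sup_right)
  · intro a b ha hb
    simpa only [ha, hb] using ax5 a b
  · intro a b
    exact ⟨⟨arr_fixed a b, ax3 a b⟩, fun q hq => (residuation a b q hq.1).1 hq.2⟩
end

section
/- Let A be an srl-monoid. Then for all a, b, c ∈ A: (a ∨ b) → c = (a → c) ∧ (b → c), and (a → b) · (b → c) ≤ a → c. -/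
/-! Write `□u = e → u`. Every `x → y` is a fixed point of `□`, and fixed points of `□` are
closed under meets and products. For a fixed point `u`, the inequality `x * u ≤ y` implies
`u ≤ x → y` (`IsSRL.le_arr`). Both claims thus reduce to inequalities in the
lattice-ordered monoid, which follow from modus ponens `x * (x → y) ≤ y` and monotonicity of
multiplication. -/

variable {A : Type*} [Lattice A] [CommMonoid A]

namespace IsSRL

variable {arr : A → A → A}

lemma mul_le_mul_of_le (hA : IsSRL arr) {a b : A} (h : a ≤ b) (c : A) : a * c ≤ b * c := by
  have := hA.mul_sup a b c
  rw [sup_eq_right.mpr h] at this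
  exact this ▸ le_sup_left

lemma arr_mono_right (hA : IsSRL arr) {x y : A} (h : x ≤ y) (z : A) : arr z x ≤ arr z y := by
  have := hA.ax4 x y z
  rw [inf_eq_left.mpr h] at this
  exact this ▸ inf_le_right

lemma box_arr (hA : IsSRL arr) (x y : A) : arr 1 (arr x y) = arr x y := by
  apply le_antisymm
  · simpa using hA.ax3 1 (arr x y)
  · simpa using hA.ax2 x y 1

/-- The restricted residuation law: the nontrivial direction of
`x * u ≤ y ↔ u ≤ x → y`, valid for the fixed points `u` of `□ = e → ·`. -/
lemma le_arr (hA : IsSRL arr) {u x y : A} (hu : arr 1 u = u) (h : x * u ≤ y) :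
    u ≤ arr x y := by
  have h6 := hA.ax6 x u
  rw [hu] at h6
  exact h6.trans (hA.arr_mono_right h x)

end IsSRL

/-- in an srl-monoid, `(a ∨ b) → c = (a → c) ∧ (b → c)` and
`(a → b)·(b → c) ≤ a → c`. -/
theorem stmt2 {A : Type*} [Lattice A] [CommMonoid A] (arr : A → A → A)
    (hA : IsSRL arr) :
    ∀ a b c : A,
      arr (a ⊔ b) c = arr a c ⊓ arr b c ∧ arr a b * arr b c ≤ arr a c := by
  intro a b c
  refine ⟨le_antisymm (le_inf ?_ ?_) ?_, ?_⟩
  · exact hA.le_arr (hA.box_arr _ _)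
      ((hA.mul_le_mul_of_le le_sup_left _).trans (hA.ax3 _ _))
  · exact hA.le_arr (hA.box_arr _ _)
      ((hA.mul_le_mul_of_le le_sup_right _).trans (hA.ax3 _ _))
  · apply hA.le_arr
    · rw [hA.ax4, hA.box_arr, hA.box_arr]
    · rw [hA.mul_sup, mul_comm a, mul_comm b]
      apply sup_le
      · refine (hA.mul_le_mul_of_le inf_le_left _).trans ?_
        rw [mul_comm]
        exact hA.ax3 _ _
      · refine (hA.mul_le_mul_of_le inf_le_right _).trans ?_
        rw [mul_comm]
        exact hA.ax3 _ _
  · apply hA.le_arr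
    · simpa only [hA.box_arr] using hA.ax5 (arr a b) (arr b c)
    · rw [← mul_assoc]
      exact (hA.mul_le_mul_of_le (hA.ax3 a b) _).trans (hA.ax3 b c)
end

section
/- Let A be an srl-monoid. Then for all a, b ∈ A: e ≤ a → a; a ≤ b if and only if e ≤ a → b; e → a ≤ a; e → (a → b) = a → b; and e → a ≤ b → (a · b). -/
/-!
Since multiplication distributes over binary joins it is monotone, and since `arr c` preserves
binary meets it is monotone in its second argument. The equivalence `a ≤ b ↔ 1 ≤ arr a b` is
`ax1` at `a ⊓ b = a` in one direction, and `a = a * 1 ≤ a * arr a b ≤ b` in the other. Taking the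
first argument of `ax3` to be `1` gives `arr 1 a ≤ a`, which with `ax2` at `z = 1` makes
`arr a b` a fixed point of `arr 1`, and with `ax6` and monotonicity gives the last inequality.
-/

variable {A : Type*} [Lattice A] [CommMonoid A]

theorem IsSRL.mul_mono_right {A : Type*} [Lattice A] [CommMonoid A] {arr : A → A → A}
    (hA : IsSRL arr) {x y : A} (c : A) (h : x ≤ y) : c * x ≤ c * y := by
  have hs := hA.mul_sup x y c
  rw [sup_eq_right.mpr h] at hs
  rw [mul_comm c x, mul_comm c y, hs]
  exact le_sup_left

theorem IsSRL.arr_mono_right_s3 {A : Type*} [Lattice A] [CommMonoid A] {arr : A → A → A}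
    (hA : IsSRL arr) {x y : A} (c : A) (h : x ≤ y) : arr c x ≤ arr c y := by
  have hs := hA.ax4 x y c
  rw [inf_eq_left.mpr h] at hs
  rw [hs]
  exact inf_le_right

/-- in an srl-monoid, `e ≤ a → a`; `a ≤ b ↔ e ≤ a → b`; `e → a ≤ a`;
`e → (a → b) = a → b`; and `e → a ≤ b → (a·b)`. -/
theorem stmt3 {A : Type*} [Lattice A] [CommMonoid A] (arr : A → A → A)
    (hA : IsSRL arr) :
    ∀ a b : A,
      (1 : A) ≤ arr a a ∧
      (a ≤ b ↔ (1 : A) ≤ arr a b) ∧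
      arr 1 a ≤ a ∧
      arr 1 (arr a b) = arr a b ∧
      arr 1 a ≤ arr b (a * b) := by
  intro a b
  have box_le : ∀ x : A, arr 1 x ≤ x := fun x => by simpa using hA.ax3 1 x
  refine ⟨by simpa using hA.ax1 a a, ⟨fun h => ?_, fun h => ?_⟩, box_le a,
    le_antisymm (box_le _) (by simpa using hA.ax2 a b 1), ?_⟩
  · simpa [inf_eq_left.mpr h] using hA.ax1 a b
  · calc a = a * 1 := (mul_one a).symm
      _ ≤ a * arr a b := hA.mul_mono_right a h
      _ ≤ b := hA.ax3 a b
  · calc arr 1 a ≤ arr b (b * arr 1 a) := hA.ax6 b a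
      _ ≤ arr b (b * a) := hA.arr_mono_right_s3 b (hA.mul_mono_right b (box_le a))
      _ = arr b (a * b) := by rw [mul_comm]
end

section
/- Let A be an srl-monoid and θ a congruence of A. Then the equivalence class e/θ of the monoid unit e is a strongly convex subalgebra of A. -/
/-!
The class of the unit is closed under the operations because `1` is idempotent for each of
them (`1 → 1 = 1` by the first and third identities), and it is convex because congruence
classes of a lattice are. For strong convexity, replacing `h` by `1` modulo `θ` turns
`a * h ≤ 1 ≤ h → a` into `a ≤ 1 ≤ (1 → a)` in the quotient, where `(1 → a) ≤ a`; hence `a`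
is congruent to `1`.
-/

variable {A : Type*} [Lattice A] [CommMonoid A]

/-- if `θ` is a congruence of an srl-monoid, then the equivalence class
`e/θ = {a : θ a e}` is a strongly convex subalgebra. -/
theorem stmt5 {A : Type*} [Lattice A] [CommMonoid A] (arr : A → A → A)
    (hA : IsSRL arr) (θ : A → A → Prop) (hθ : IsCongruence arr θ) :
    IsStronglyConvexSubalgebra arr {a : A | θ a 1} := by
  obtain ⟨heq, hinf, hsup, hmul, harr⟩ := hθ
  have h11 : arr 1 1 = 1 := by
    apply le_antisymm
    · simpa using hA.ax3 1 1
    · simpa using hA.ax1 1 1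
  refine ⟨⟨heq.refl 1, ?_, ?_, ?_, ?_, ?_⟩, ?_⟩
  · intro a b ha hb
    simpa using hinf _ _ _ _ ha hb
  · intro a b ha hb
    simpa using hsup _ _ _ _ ha hb
  · intro a b ha hb
    simpa using hmul _ _ _ _ ha hb
  · intro a b ha hb
    simpa [h11] using harr _ _ _ _ ha hb
  · intro a b c ha hb hac hcb
    -- `c = a ⊔ c` is congruent to `1 ⊔ c`, and meeting with `b` gives `c ~ (1 ⊔ c) ⊓ b ~ 1`.
    have h1 : θ c (1 ⊔ c) := by
      simpa [sup_eq_right.2 hac] using hsup _ _ _ _ ha (heq.refl c)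
    have h2 : θ (c ⊓ b) ((1 ⊔ c) ⊓ 1) := hinf _ _ _ _ h1 hb
    simpa [inf_eq_left.2 hcb] using h2
  · intro a h hh hah hha
    -- `a * h ≤ 1` becomes `a ≤ 1` modulo `θ`.
    have h1 : θ 1 (a ⊔ 1) := by
      simpa [sup_eq_right.2 hah] using
        hsup _ _ _ _ (hmul _ _ _ _ (heq.refl a) hh) (heq.refl 1)
    -- `1 ≤ h → a` becomes `1 ≤ (1 → a)` modulo `θ`.
    have h2 : θ 1 (arr 1 a ⊓ 1) := by
      simpa [inf_eq_right.2 hha] using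
        hinf _ _ _ _ (harr _ _ _ _ hh (heq.refl a)) (heq.refl 1)
    have h3 : arr 1 a ⊓ 1 ≤ a := inf_le_left.trans (by simpa using hA.ax3 1 a)
    -- Since `(1 → a) ≤ a`, joining with `a` gives `1 ≤ a` modulo `θ`.
    have h4 : θ (1 ⊔ a) a := by
      simpa [sup_eq_right.2 h3] using hsup _ _ _ _ h2 (heq.refl a)
    rw [sup_comm] at h4
    exact heq.symm (heq.trans h1 h4)
end

section
/- Let A be an srl-monoid and θ a congruence of A. Then for all a, b ∈ A: (a, b) ∈ θ if and only if (s(a,b), e) ∈ θ. -/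
/-!
If `θ a b`, then both `a → b` and `b → a` are congruent to `a → a ≥ e`, so `s(a,b)` is congruent
to `e`. Conversely, since `x · (x → y) ≤ y`, the element `s = s(a,b)` satisfies `a · s ≤ b` and
`b · s ≤ a`; when `s` is congruent to `e`, both `a` and `b` are then congruent to `a ⊔ b`.
-/

variable {A : Type*} [Lattice A] [CommMonoid A]

/-- if `θ` is a congruence of an srl-monoid, then `(a,b) ∈ θ` iff
`(s(a,b), e) ∈ θ`, where `s(a,b) = (a→b) ⊓ (b→a) ⊓ e`. -/
theorem stmt6 {A : Type*} [Lattice A] [CommMonoid A] (arr : A → A → A)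
    (hA : IsSRL arr) (θ : A → A → Prop) (hθ : IsCongruence arr θ) :
    ∀ a b : A, θ a b ↔ θ (srlS arr a b) 1 := by
  obtain ⟨heq, hinf, hsup, hmul, harr⟩ := hθ
  -- Multiplication distributes over joins, hence is monotone.
  have hmono : ∀ a x y : A, x ≤ y → a * x ≤ a * y := fun a x y h => by
    have := hA.mul_sup x y a
    rw [sup_eq_right.mpr h] at this
    rw [mul_comm a x, mul_comm a y, this]
    exact le_sup_left
  -- If `s` is congruent to the unit and `x * s ≤ y`, then `y = x * s ⊔ y` is congruent to `x ⊔ y`.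
  have hjoin : ∀ s x y : A, θ s 1 → x * s ≤ y → θ y (x ⊔ y) := fun s x y hs h => by
    have := hsup _ _ _ _ (hmul x x s 1 (heq.refl x) hs) (heq.refl y)
    rwa [sup_eq_right.mpr h, mul_one] at this
  intro a b
  constructor
  · intro h
    have hrefl : (1 : A) ≤ arr a a := by simpa using hA.ax1 a a
    have := hinf _ _ _ _ (hinf _ _ _ _ (harr a a b a (heq.refl a) (heq.symm h))
      (harr b a a a (heq.symm h) (heq.refl a))) (heq.refl 1)
    rwa [inf_idem, inf_eq_right.mpr hrefl] at this
  · intro h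
    have hab : a * srlS arr a b ≤ b :=
      (hmono _ _ _ (inf_le_left.trans inf_le_left)).trans (hA.ax3 a b)
    have hba : b * srlS arr a b ≤ a :=
      (hmono _ _ _ (inf_le_left.trans inf_le_right)).trans (hA.ax3 b a)
    have h1 := hjoin _ a b h hab
    have h2 := hjoin _ b a h hba
    rw [sup_comm] at h2
    exact heq.trans h2 (heq.symm h1)
end

section
/- Let A be an srl-monoid and θ, ψ congruences of A. Then θ ⊆ ψ if and only if e/θ ⊆ e/ψ (i.e., for all a ∈ A, (a,e) ∈ θ implies (a,e) ∈ ψ). -/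
/-!
For `a, b ∈ A` put `s = s(a,b) = (a → b) ⊓ (b → a) ⊓ e`. If `a θ b`, then `s(a,b) θ s(a,a) = e`,
because `e ≤ a → a`; hence `s ψ e` by hypothesis. Multiplication is monotone, so
`a * s ≤ a * (a → b) ≤ b`, and in `A/ψ`, where `s` becomes `e`, this reads `a ≤ b`. By symmetry of
`s`, also `b ≤ a` in `A/ψ`, so `a ψ b`.
-/

variable {A : Type*} [Lattice A] [CommMonoid A]

theorem IsSRL.mul_le_mul_left_of_le {A : Type*} [Lattice A] [CommMonoid A] {arr : A → A → A}
    (hA : IsSRL arr) {x y : A} (h : x ≤ y) (a : A) : a * x ≤ a * y := by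
  rw [mul_comm a x, mul_comm a y, ← sup_eq_right, ← hA.mul_sup, sup_eq_right.mpr h]

theorem srlS_self {A : Type*} [Lattice A] [CommMonoid A] {arr : A → A → A}
    (hA : IsSRL arr) (a : A) : srlS arr a a = 1 := by
  have h := hA.ax1 a a
  rw [inf_idem] at h
  simpa [srlS] using h

/-- If `s ≡ e` modulo a congruence and `a * s ≤ b`, then `a ≤ b` in the quotient. -/
theorem IsCongruence.inf_rel_left {A : Type*} [Lattice A] [CommMonoid A] {arr : A → A → A}
    {ψ : A → A → Prop} (hψ : IsCongruence arr ψ) {a b s : A} (hs : ψ s 1) (h : a * s ≤ b) :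
    ψ (a ⊓ b) a := by
  obtain ⟨he, hinf, -, hmul, -⟩ := hψ
  have h1 : ψ (a * s) a := by simpa using hmul a a s 1 (he.refl a) hs
  have h2 : ψ (a * s) (a ⊓ b) := by
    simpa [inf_eq_left.mpr h] using hinf _ _ b b h1 (he.refl b)
  exact he.trans (he.symm h2) h1

/-- for congruences `θ, ψ` of an srl-monoid, `θ ⊆ ψ` iff `e/θ ⊆ e/ψ`. -/
theorem stmt7 {A : Type*} [Lattice A] [CommMonoid A] (arr : A → A → A)
    (hA : IsSRL arr) (θ ψ : A → A → Prop)
    (hθ : IsCongruence arr θ) (hψ : IsCongruence arr ψ) :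
    (∀ a b : A, θ a b → ψ a b) ↔ (∀ a : A, θ a 1 → ψ a 1) := by
  refine ⟨fun h a => h a 1, fun h a b hab => ?_⟩
  have hs : ψ (srlS arr a b) 1 := by
    apply h
    obtain ⟨he, hinf, -, -, harr⟩ := hθ
    have hba := he.symm hab
    rw [← srlS_self hA a]
    exact hinf _ _ _ _ (hinf _ _ _ _ (harr _ _ _ _ (he.refl a) hba)
      (harr _ _ _ _ hba (he.refl a))) (he.refl 1)
  have h1 : a * srlS arr a b ≤ b :=
    (hA.mul_le_mul_left_of_le (inf_le_left.trans inf_le_left) a).trans (hA.ax3 a b)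
  have h2 : b * srlS arr a b ≤ a :=
    (hA.mul_le_mul_left_of_le (inf_le_left.trans inf_le_right) b).trans (hA.ax3 b a)
  have h3 := hψ.inf_rel_left hs h1
  have h4 := hψ.inf_rel_left hs h2
  rw [inf_comm] at h4
  exact hψ.1.trans (hψ.1.symm h3) h4
end

section
/- Let A be an srl-monoid satisfying e → a = a for every a ∈ A (i.e., A is a commutative residuated lattice). Then every convex subalgebra of A is a strongly convex subalgebra of A. -/
/-! If `h ∈ H`, `a·h ≤ e` and `e ≤ h → a`, then `h ≤ h·(h → a) ≤ a ≤ h → h·a ≤ h → e`, so `a` lies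
between two elements of `H` and convexity applies. The assumption `e → a = a` is what makes
`a ≤ h → h·a` an instance of the last axiom. -/

variable {A : Type*} [Lattice A] [CommMonoid A]

/-- in an srl-monoid satisfying `e → a = a` for all `a` (i.e. a
commutative residuated lattice), every convex subalgebra is strongly convex. -/
theorem stmt12 {A : Type*} [Lattice A] [CommMonoid A] (arr : A → A → A)
    (hA : IsSRL arr) (hCRL : ∀ a : A, arr 1 a = a) :
    ∀ H : Set A, IsConvexSubalgebra arr H → IsStronglyConvexSubalgebra arr H := by
  intro H hH
  refine ⟨hH, fun a h hh hle hge => ?_⟩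
  have lower : h ≤ a := by
    -- Multiplication is monotone because it distributes over joins.
    have hmul := hA.mul_sup 1 (arr h a) h
    rw [sup_eq_right.mpr hge, one_mul, mul_comm _ h] at hmul
    exact (sup_eq_right.mp hmul.symm).trans (hA.ax3 h a)
  have upper : a ≤ arr h 1 := by
    have hres := hA.ax6 h a
    rw [hCRL, mul_comm h a] at hres
    -- The arrow is monotone in its second argument because it preserves meets there.
    have hmono := hA.ax4 (a * h) 1 h
    rw [inf_eq_left.mpr hle] at hmono
    exact hres.trans (inf_eq_left.mp hmono.symm)
  exact hH.convex h (arr h 1) a hh (hH.arr_mem h 1 hh hH.one_mem) lower upper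
end

section
/- Let A be an srl-monoid, a ∈ A and a₁, …, aₙ ∈ A. Then: (1) □(□(a₁) · □(a₂) · … · □(aₙ)) = □(a₁) · □(a₂) · … · □(aₙ); (2) □(a₁) · □(a₂) · … · □(aₙ) ≤ a → (a · (□(a₁) · □(a₂) · … · □(aₙ))). -/
variable {A : Type*} [Lattice A] [CommMonoid A]

/-- in an srl-monoid, for a (nonempty) finite list `a₁, …, aₙ` and `a ∈ A`:
(1) `□(□(a₁)·…·□(aₙ)) = □(a₁)·…·□(aₙ)`; (2) `□(a₁)·…·□(aₙ) ≤ a → (a·(□(a₁)·…·□(aₙ)))`. -/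
theorem stmt13 {A : Type*} [Lattice A] [CommMonoid A] (arr : A → A → A)
    (hA : IsSRL arr) (a : A) (l : List A) (hl : l ≠ []) :
    arr 1 ((l.map fun x => arr 1 x).prod) = (l.map fun x => arr 1 x).prod ∧
    (l.map fun x => arr 1 x).prod ≤ arr a (a * (l.map fun x => arr 1 x).prod) := by
  -- By induction, products of boxes are fixed by `□`; the empty product is covered by `□1 = 1`.
  have key : ∀ m : List A,
      arr 1 ((m.map fun x => arr 1 x).prod) = (m.map fun x => arr 1 x).prod := by
    intro m
    induction m with
    | nil =>
      simp only [List.map_nil, List.prod_nil]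
      exact le_antisymm (by simpa using hA.ax3 1 1) (by simpa using hA.ax1 1 1)
    | cons x m ih =>
      simp only [List.map_cons, List.prod_cons]
      rw [← ih]
      exact hA.ax5 x _
  refine ⟨key l, ?_⟩
  -- Since the product is itself a box, axiom 6 applies to it.
  have h := hA.ax6 a ((l.map fun x => arr 1 x).prod)
  rwa [key l] at h
end

section
/- Let A be an srl-monoid and S ⊆ A⁻ a subset of the negative cone. Define K = {x ∈ A : there exist h in the submonoid of (A, ·, e) generated by S and n ∈ ℕ such that □ⁿ(h) ≤ x and x · □ⁿ(h) ≤ e}. Then K is a strongly convex subalgebra of A containing S, and K is contained in every strongly convex subalgebra of A that contains S (i.e., K = C[S], the smallest strongly convex subalgebra containing S). -/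
/-!
Write `□ a = e → a`. The axioms imply that `Q = {q : e → q = q}` is a submonoid and that
`x → y` is the largest `q ∈ Q` with `x · q ≤ y` (`IsSRL.le_arr`, `IsSRL.ax3`).

For `h` in the submonoid generated by `S` the powers `(□ h) ^ n` lie in `Q`, are below `e`, and
form a family `P` in which any product `p · q` has a member of `P` below it
(`IsSRL.exists_mem_boxPow_le_mul`), because `□ (h · k) ≤ □ h, □ k`. Since `□ h ≤ h`, the set `K`
consists of the `x` with `p ≤ x` and `x · p ≤ e` for some `p ∈ P` (`IsSRL.mem_gen_iff`). Each
closure property then follows by passing to a common lower bound in `P`. For minimality, a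
strongly convex `H ⊇ S` contains every `□ⁿ(h)`, and `□ⁿ(h) ≤ x` means `e ≤ □ⁿ(h) → x`, so strong
convexity puts `x` in `H`.
-/

variable {A : Type*} [Lattice A] [CommMonoid A]

theorem IsSRL.isOrderedMonoid {arr : A → A → A} (hA : IsSRL arr) : IsOrderedMonoid A where
  mul_le_mul_left a b hab c := by
    have h := hA.mul_sup a b c
    rw [sup_eq_right.mpr hab] at h
    rw [h]
    exact le_sup_left

theorem IsSRL.box_le {arr : A → A → A} (hA : IsSRL arr) (x : A) : arr 1 x ≤ x := by
  simpa using hA.ax3 1 x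

theorem IsSRL.arr_mono {arr : A → A → A} (hA : IsSRL arr) (z : A) {x y : A} (h : x ≤ y) :
    arr z x ≤ arr z y := by
  have h4 := hA.ax4 x y z
  rw [inf_eq_left.mpr h] at h4
  rw [h4]
  exact inf_le_right

theorem IsSRL.one_le_arr {arr : A → A → A} (hA : IsSRL arr) {x y : A} (h : x ≤ y) :
    1 ≤ arr x y := by
  simpa [inf_eq_left.mpr h] using hA.ax1 x y

theorem IsSRL.box_box {arr : A → A → A} (hA : IsSRL arr) (x : A) :
    arr 1 (arr 1 x) = arr 1 x :=
  le_antisymm (hA.box_le _) (by simpa using hA.ax2 1 x 1)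

/-- The nontrivial half of residuation, for box-fixed elements: together with `IsSRL.ax3` it makes
`arr x y` the largest box-fixed `q` with `x * q ≤ y`. -/
theorem IsSRL.le_arr_s14 {arr : A → A → A} (hA : IsSRL arr) {x y q : A} (hq : arr 1 q = q)
    (h : x * q ≤ y) : q ≤ arr x y := by
  have h6 := hA.ax6 x q
  rw [hq] at h6
  exact h6.trans (hA.arr_mono x h)

theorem IsSRL.box_pow {arr : A → A → A} (hA : IsSRL arr) (h : A) (n : ℕ) :
    arr 1 (arr 1 h ^ n) = arr 1 h ^ n := by
  induction n with
  | zero => exact le_antisymm (by simpa using hA.box_le 1) (by simpa using hA.one_le_arr le_rfl)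
  | succ n ih =>
    rw [pow_succ]
    have h5 := hA.ax5 (arr 1 h ^ n) h
    rwa [ih] at h5

theorem boxIter_succ (arr : A → A → A) (n : ℕ) (h : A) :
    boxIter arr (n + 1) h = arr 1 h ^ (n + 1) := by
  induction n with
  | zero => simp [boxIter]
  | succ n ih => rw [boxIter, ih, pow_succ' _ (n + 1)]

/-- The powers `(□ h) ^ n` with `h` in the submonoid generated by `S`. In contrast to `boxIter`,
the exponent `0` gives the unit. -/
def boxPow (arr : A → A → A) (S : Set A) : Set A :=
  {p | ∃ h ∈ Submonoid.closure S, ∃ n : ℕ, p = arr 1 h ^ n}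

theorem IsSRL.closure_le_one {arr : A → A → A} (hA : IsSRL arr) {S : Set A}
    (hS : S ⊆ {a : A | a ≤ 1}) {h : A} (hh : h ∈ Submonoid.closure S) : h ≤ 1 := by
  have := hA.isOrderedMonoid
  induction hh using Submonoid.closure_induction with
  | mem x hx => exact hS hx
  | one => exact le_rfl
  | mul x y _ _ hx hy => exact mul_le_one' hx hy

theorem IsSRL.boxPow_le_one {arr : A → A → A} (hA : IsSRL arr) {S : Set A}
    (hS : S ⊆ {a : A | a ≤ 1}) {p : A} (hp : p ∈ boxPow arr S) : p ≤ 1 := by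
  have := hA.isOrderedMonoid
  obtain ⟨h, hh, n, rfl⟩ := hp
  exact pow_le_one' ((hA.box_le h).trans (hA.closure_le_one hS hh)) n

theorem IsSRL.box_boxPow {arr : A → A → A} (hA : IsSRL arr) {S : Set A} {p : A}
    (hp : p ∈ boxPow arr S) : arr 1 p = p := by
  obtain ⟨h, -, n, rfl⟩ := hp
  exact hA.box_pow h n

/-- Directedness of the family of box powers: `(□ (h · k)) ^ (m + n) ≤ (□ h) ^ m · (□ k) ^ n`. -/
theorem IsSRL.exists_mem_boxPow_le_mul {arr : A → A → A} (hA : IsSRL arr) {S : Set A}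
    (hS : S ⊆ {a : A | a ≤ 1}) {p q : A} (hp : p ∈ boxPow arr S) (hq : q ∈ boxPow arr S) :
    ∃ r ∈ boxPow arr S, r ≤ p * q := by
  have := hA.isOrderedMonoid
  obtain ⟨h, hh, m, rfl⟩ := hp
  obtain ⟨k, hk, n, rfl⟩ := hq
  refine ⟨_, ⟨h * k, mul_mem hh hk, m + n, rfl⟩, ?_⟩
  rw [pow_add]
  exact mul_le_mul'
    (pow_le_pow_left' (hA.arr_mono 1 (mul_le_of_le_one_right' (hA.closure_le_one hS hk))) m)
    (pow_le_pow_left' (hA.arr_mono 1 (mul_le_of_le_one_left' (hA.closure_le_one hS hh))) n)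

/-- The generated set can be described through `boxPow` instead of `boxIter`. -/
theorem IsSRL.mem_gen_iff {arr : A → A → A} (hA : IsSRL arr) {S : Set A}
    (hS : S ⊆ {a : A | a ≤ 1}) {x : A} :
    x ∈ {x : A | ∃ h ∈ Submonoid.closure S, ∃ n : ℕ,
      boxIter arr n h ≤ x ∧ x * boxIter arr n h ≤ 1} ↔
      ∃ p ∈ boxPow arr S, p ≤ x ∧ x * p ≤ 1 := by
  have := hA.isOrderedMonoid
  constructor
  · rintro ⟨h, hh, n, h1, h2⟩
    cases n with
    | zero =>
      -- `□⁰(h) = h` need not be a power of `□ h`; the smaller `□ h` serves as witness.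
      have hle : arr 1 h ^ 1 ≤ boxIter arr 0 h := by simpa [boxIter] using hA.box_le h
      exact ⟨_, ⟨h, hh, 1, rfl⟩, hle.trans h1, (mul_le_mul_right hle x).trans h2⟩
    | succ n =>
      rw [boxIter_succ] at h1 h2
      exact ⟨_, ⟨h, hh, n + 1, rfl⟩, h1, h2⟩
  · rintro ⟨_, ⟨h, hh, n, rfl⟩, h1, h2⟩
    -- Raising the exponent by one avoids the differing conventions at `0`.
    have hle : boxIter arr (n + 1) h ≤ arr 1 h ^ n := by
      rw [boxIter_succ, pow_succ]
      exact mul_le_of_le_one_right' ((hA.box_le h).trans (hA.closure_le_one hS hh))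
    exact ⟨h, hh, n + 1, hle.trans h1, (mul_le_mul_right hle x).trans h2⟩

/-- description of the strongly convex subalgebra generated by a subset
`S` of the negative cone: the set `K` below is the smallest strongly convex subalgebra
containing `S`. -/
theorem stmt14 {A : Type*} [Lattice A] [CommMonoid A] (arr : A → A → A)
    (hA : IsSRL arr) (S : Set A) (hS : S ⊆ {a : A | a ≤ 1}) :
    IsStronglyConvexSubalgebra arr
      {x : A | ∃ h ∈ Submonoid.closure S, ∃ n : ℕ,
        boxIter arr n h ≤ x ∧ x * boxIter arr n h ≤ 1} ∧
    S ⊆ {x : A | ∃ h ∈ Submonoid.closure S, ∃ n : ℕ,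
        boxIter arr n h ≤ x ∧ x * boxIter arr n h ≤ 1} ∧
    (∀ H : Set A, IsStronglyConvexSubalgebra arr H → S ⊆ H →
      {x : A | ∃ h ∈ Submonoid.closure S, ∃ n : ℕ,
        boxIter arr n h ≤ x ∧ x * boxIter arr n h ≤ 1} ⊆ H) := by
  have := hA.isOrderedMonoid
  -- Two elements of the generated set admit a common witness below the product of their own.
  have common : ∀ p ∈ boxPow arr S, ∀ q ∈ boxPow arr S,
      ∃ r ∈ boxPow arr S, r ≤ p * q ∧ r ≤ p ∧ r ≤ q := by
    intro p hp q hq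
    obtain ⟨r, hr, hle⟩ := hA.exists_mem_boxPow_le_mul hS hp hq
    exact ⟨r, hr, hle, hle.trans (mul_le_of_le_one_right' (hA.boxPow_le_one hS hq)),
      hle.trans (mul_le_of_le_one_left' (hA.boxPow_le_one hS hp))⟩
  refine ⟨⟨⟨?_, ?_, ?_, ?_, ?_, ?_⟩, ?_⟩, ?_, ?_⟩
  · exact (hA.mem_gen_iff hS).2 ⟨1, ⟨1, one_mem _, 0, by simp⟩, le_rfl, by simp⟩
  · intro a b ha hb
    obtain ⟨p, hp, hpa, hap⟩ := (hA.mem_gen_iff hS).1 ha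
    obtain ⟨q, hq, hqb, hbq⟩ := (hA.mem_gen_iff hS).1 hb
    obtain ⟨r, hr, -, hrp, hrq⟩ := common p hp q hq
    exact (hA.mem_gen_iff hS).2 ⟨r, hr, le_inf (hrp.trans hpa) (hrq.trans hqb),
      (mul_le_mul' inf_le_left hrp).trans hap⟩
  · intro a b ha hb
    obtain ⟨p, hp, hpa, hap⟩ := (hA.mem_gen_iff hS).1 ha
    obtain ⟨q, hq, hqb, hbq⟩ := (hA.mem_gen_iff hS).1 hb
    obtain ⟨r, hr, -, hrp, hrq⟩ := common p hp q hq
    refine (hA.mem_gen_iff hS).2 ⟨r, hr, (hrp.trans hpa).trans le_sup_left, ?_⟩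
    rw [hA.mul_sup]
    exact sup_le ((mul_le_mul' le_rfl hrp).trans hap) ((mul_le_mul' le_rfl hrq).trans hbq)
  · intro a b ha hb
    obtain ⟨p, hp, hpa, hap⟩ := (hA.mem_gen_iff hS).1 ha
    obtain ⟨q, hq, hqb, hbq⟩ := (hA.mem_gen_iff hS).1 hb
    obtain ⟨r, hr, hrpq, -, -⟩ := common p hp q hq
    refine (hA.mem_gen_iff hS).2 ⟨r, hr, hrpq.trans (mul_le_mul' hpa hqb), ?_⟩
    calc a * b * r ≤ a * b * (p * q) := mul_le_mul' le_rfl hrpq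
      _ = (a * p) * (b * q) := mul_mul_mul_comm a b p q
      _ ≤ 1 := mul_le_one' hap hbq
  · intro a b ha hb
    obtain ⟨p, hp, hpa, hap⟩ := (hA.mem_gen_iff hS).1 ha
    obtain ⟨q, hq, hqb, hbq⟩ := (hA.mem_gen_iff hS).1 hb
    obtain ⟨r, hr, hrpq, -, -⟩ := common p hp q hq
    refine (hA.mem_gen_iff hS).2 ⟨r, hr, hA.le_arr_s14 (hA.box_boxPow hr) ?_, ?_⟩
    · calc a * r ≤ a * (p * q) := mul_le_mul' le_rfl hrpq
        _ = (a * p) * q := (mul_assoc a p q).symm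
        _ ≤ q := mul_le_of_le_one_left' hap
        _ ≤ b := hqb
    · calc arr a b * r ≤ arr a b * (p * q) := mul_le_mul' le_rfl hrpq
        _ ≤ arr a b * (a * q) := mul_le_mul' le_rfl (mul_le_mul' hpa le_rfl)
        _ = (a * arr a b) * q := by rw [← mul_assoc, mul_comm (arr a b) a]
        _ ≤ b * q := mul_le_mul' (hA.ax3 a b) le_rfl
        _ ≤ 1 := hbq
  · intro a b c ha hb hac hcb
    obtain ⟨p, hp, hpa, hap⟩ := (hA.mem_gen_iff hS).1 ha
    obtain ⟨q, hq, hqb, hbq⟩ := (hA.mem_gen_iff hS).1 hb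
    obtain ⟨r, hr, -, hrp, hrq⟩ := common p hp q hq
    exact (hA.mem_gen_iff hS).2 ⟨r, hr, (hrp.trans hpa).trans hac,
      (mul_le_mul' hcb hrq).trans hbq⟩
  · rintro a h ⟨k, hk, n, h1, -⟩ hah hle
    have hha : h ≤ a := (le_mul_of_one_le_right' hle).trans (hA.ax3 h a)
    exact ⟨k, hk, n, h1.trans hha, (mul_le_mul' le_rfl h1).trans hah⟩
  · intro s hs
    exact ⟨s, Submonoid.subset_closure hs, 0, le_rfl, mul_le_one' (hS hs) (hS hs)⟩
  · rintro H hH hSH x ⟨h, hh, n, h1, h2⟩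
    have hhH : h ∈ H :=
      (Submonoid.closure_le (S := ⟨⟨H, fun {a b} => hH.toConvex.mul_mem a b⟩,
        hH.toConvex.one_mem⟩)).2 hSH hh
    have hbox := hH.toConvex.arr_mem 1 h hH.toConvex.one_mem hhH
    have hiter : ∀ n, boxIter arr (n + 1) h ∈ H := by
      intro n
      induction n with
      | zero => exact hbox
      | succ n ih => exact hH.toConvex.mul_mem _ _ hbox ih
    have hmem : boxIter arr n h ∈ H := by
      cases n with
      | zero => exact hhH
      | succ n => exact hiter n
    exact hH.strong x _ hmem h2 (hA.one_le_arr h1)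
end

section
/- Let A be an srl-monoid and a, b, x, y ∈ A. Then (x,y) belongs to every congruence of A containing (a,b) (i.e., (x,y) ∈ θ(a,b), the smallest congruence containing (a,b)) if and only if there exist natural numbers n and m such that □^m(s(a,b)^n) ≤ s(x,y). -/
/-!
Call `b` *open* when `b ≤ □b` (equivalently `□b = b`). All arrows and `1` are open, and open
elements are closed under `⊓` and `·`; moreover, for open `h` the residuation law `h ≤ x → y ↔ x * h ≤ y` holds. Hence
`s = s(a,b)` and its powers are open, `□^m(s^n)` is again a power of `s`, and
`s^n ≤ s(x,y)` says exactly that `x * s^n ≤ y` and `y * s^n ≤ x`.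

The relation "`x * s^n ≤ y` and `y * s^n ≤ x` for some `n`" is a congruence containing `(a,b)`, which
gives one direction. Conversely, every congruence containing `(a,b)` identifies `s(a,b)` with
`s(a,a) = 1`, hence `x` with `x * s^n ≤ y`, so it identifies both `x` and `y` with `x ⊓ y`.
-/

variable {A : Type*} [Lattice A] [CommMonoid A]

namespace IsSRL

variable {arr : A → A → A}

theorem mulLeftMono (hA : IsSRL arr) : MulLeftMono A := ⟨fun c a b hab => by
  have h := hA.mul_sup a b c
  rw [sup_eq_right.2 hab] at h
  change c * a ≤ c * b
  rw [mul_comm c a, mul_comm c b, h]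
  exact le_sup_left⟩

theorem arr_mono_s16 (hA : IsSRL arr) {x y : A} (z : A) (h : x ≤ y) : arr z x ≤ arr z y := by
  have h4 := hA.ax4 x y z
  rw [inf_eq_left.2 h] at h4
  rw [h4]
  exact inf_le_right

/-- An open element `h` satisfies the residuation law with respect to `arr`. -/
theorem le_arr_iff (hA : IsSRL arr) {h : A} (hh : h ≤ arr 1 h) (x y : A) :
    h ≤ arr x y ↔ x * h ≤ y := by
  have := hA.mulLeftMono
  constructor
  · intro H
    exact (mul_le_mul_right H x).trans (hA.ax3 x y)
  · intro H
    have hle : arr 1 h ≤ h := by simpa using hA.ax3 1 h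
    have heq : arr 1 h = h := le_antisymm hle hh
    have h6 := hA.ax6 x h
    rw [heq] at h6
    exact h6.trans (hA.arr_mono_s16 x H)

theorem one_open (hA : IsSRL arr) : (1 : A) ≤ arr 1 1 := by
  simpa using hA.ax1 1 1

theorem arr_open (hA : IsSRL arr) (x y : A) : arr x y ≤ arr 1 (arr x y) := by
  simpa using hA.ax2 x y 1

theorem mul_open (hA : IsSRL arr) {h k : A} (hh : h ≤ arr 1 h) (hk : k ≤ arr 1 k) :
    h * k ≤ arr 1 (h * k) := by
  have h1 : arr 1 h = h := le_antisymm (by simpa using hA.ax3 1 h) hh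
  have k1 : arr 1 k = k := le_antisymm (by simpa using hA.ax3 1 k) hk
  have h5 := hA.ax5 h k
  rw [h1, k1] at h5
  exact h5.ge

theorem inf_open (hA : IsSRL arr) {h k : A} (hh : h ≤ arr 1 h) (hk : k ≤ arr 1 k) :
    h ⊓ k ≤ arr 1 (h ⊓ k) := by
  rw [hA.ax4]
  exact inf_le_inf hh hk

theorem pow_open (hA : IsSRL arr) {h : A} (hh : h ≤ arr 1 h) (n : ℕ) :
    h ^ n ≤ arr 1 (h ^ n) := by
  induction n with
  | zero => simpa using hA.one_open
  | succ n ih =>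
    rw [pow_succ]
    exact hA.mul_open ih hh

theorem srlS_open (hA : IsSRL arr) (a b : A) : srlS arr a b ≤ arr 1 (srlS arr a b) :=
  hA.inf_open (hA.inf_open (hA.arr_open a b) (hA.arr_open b a)) hA.one_open

theorem le_srlS_iff (hA : IsSRL arr) {h : A} (hh : h ≤ arr 1 h) (h1 : h ≤ 1) (x y : A) :
    h ≤ srlS arr x y ↔ x * h ≤ y ∧ y * h ≤ x := by
  simp only [srlS, le_inf_iff, hA.le_arr_iff hh, h1, and_true]

/-- On open elements `□^{m+1}` is the `(m+1)`-st power. -/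
theorem boxIter_succ (hA : IsSRL arr) {h : A} (hh : h ≤ arr 1 h) (m : ℕ) :
    boxIter arr (m + 1) h = h ^ (m + 1) := by
  have h1 : arr 1 h = h := le_antisymm (by simpa using hA.ax3 1 h) hh
  induction m with
  | zero => simpa [boxIter] using h1
  | succ m ih => rw [boxIter, ih, h1, pow_succ' h (m + 1)]

/-- The relation `∃ n, x * s ^ n ≤ y ∧ y * s ^ n ≤ x` is a congruence, for any open `s ≤ 1`. -/
theorem isCongruence_pow (hA : IsSRL arr) {s : A} (hs : s ≤ arr 1 s) (hs1 : s ≤ 1) :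
    IsCongruence arr fun x y => ∃ n : ℕ, x * s ^ n ≤ y ∧ y * s ^ n ≤ x := by
  have := hA.mulLeftMono
  have p1 : ∀ n : ℕ, s ^ n ≤ 1 := fun n => pow_le_one' hs1 n
  have dec : ∀ (x : A) (n : ℕ), x * s ^ n ≤ x := fun x n => mul_le_of_le_one_right' (p1 n)
  -- Absorption of extra powers of `s`, used to combine two witnesses into their sum.
  have wl : ∀ {x y : A} {n : ℕ} (m : ℕ), x * s ^ n ≤ y → x * s ^ (n + m) ≤ y := by
    intro x y n m h
    rw [pow_add, ← mul_assoc]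
    exact (dec _ m).trans h
  have wr : ∀ {x y : A} {n : ℕ} (m : ℕ), x * s ^ n ≤ y → x * s ^ (m + n) ≤ y := by
    intro x y n m h
    rw [add_comm]
    exact wl m h
  have tr : ∀ {x y z : A} {n m : ℕ}, x * s ^ n ≤ y → y * s ^ m ≤ z → x * s ^ (n + m) ≤ z := by
    intro x y z n m h k
    rw [pow_add, ← mul_assoc]
    exact (mul_le_mul_left h _).trans k
  have hinf : ∀ {a b c d : A} {n m : ℕ}, a * s ^ n ≤ b → c * s ^ m ≤ d →
      (a ⊓ c) * s ^ (n + m) ≤ b ⊓ d := by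
    intro a b c d n m h k
    exact le_inf ((mul_le_mul_left inf_le_left _).trans (wl m h))
      ((mul_le_mul_left inf_le_right _).trans (wr n k))
  have hsup : ∀ {a b c d : A} {n m : ℕ}, a * s ^ n ≤ b → c * s ^ m ≤ d →
      (a ⊔ c) * s ^ (n + m) ≤ b ⊔ d := by
    intro a b c d n m h k
    rw [hA.mul_sup]
    exact sup_le_sup (wl m h) (wr n k)
  have hmul : ∀ {a b c d : A} {n m : ℕ}, a * s ^ n ≤ b → c * s ^ m ≤ d →
      (a * c) * s ^ (n + m) ≤ b * d := by
    intro a b c d n m h k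
    rw [pow_add, mul_mul_mul_comm]
    exact mul_le_mul' h k
  have harr : ∀ {a b c d : A} {n m : ℕ}, b * s ^ n ≤ a → c * s ^ m ≤ d →
      arr a c * s ^ (n + m) ≤ arr b d := by
    intro a b c d n m h k
    rw [hA.le_arr_iff (hA.mul_open (hA.arr_open a c) (hA.pow_open hs _))]
    calc b * (arr a c * s ^ (n + m)) = (b * s ^ n) * arr a c * s ^ m := by
          rw [pow_add]; ac_rfl
      _ ≤ a * arr a c * s ^ m := mul_le_mul_left (mul_le_mul_left h _) _
      _ ≤ c * s ^ m := mul_le_mul_left (hA.ax3 a c) _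
      _ ≤ d := k
  refine ⟨⟨fun x => ⟨0, by simp⟩, fun ⟨n, h, k⟩ => ⟨n, k, h⟩, ?_⟩, ?_, ?_, ?_, ?_⟩
  · rintro x y z ⟨n, h, h'⟩ ⟨m, k, k'⟩
    exact ⟨n + m, tr h k, add_comm n m ▸ tr k' h'⟩
  · rintro a b c d ⟨n, h, h'⟩ ⟨m, k, k'⟩
    exact ⟨n + m, hinf h k, hinf h' k'⟩
  · rintro a b c d ⟨n, h, h'⟩ ⟨m, k, k'⟩
    exact ⟨n + m, hsup h k, hsup h' k'⟩
  · rintro a b c d ⟨n, h, h'⟩ ⟨m, k, k'⟩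
    exact ⟨n + m, hmul h k, hmul h' k'⟩
  · rintro a b c d ⟨n, h, h'⟩ ⟨m, k, k'⟩
    exact ⟨n + m, harr h' k, harr h k'⟩

end IsSRL

/-- `(x,y) ∈ θ(a,b)` (the smallest congruence containing `(a,b)`) iff
there are `n, m ∈ ℕ` with `□^m(s(a,b)^n) ≤ s(x,y)`. -/
theorem stmt16 {A : Type*} [Lattice A] [CommMonoid A] (arr : A → A → A)
    (hA : IsSRL arr) (a b x y : A) :
    (∀ θ : A → A → Prop, IsCongruence arr θ → θ a b → θ x y) ↔
    ∃ n m : ℕ, boxIter arr m (srlS arr a b ^ n) ≤ srlS arr x y := by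
  have := hA.mulLeftMono
  have hs := hA.srlS_open a b
  have hs1 : srlS arr a b ≤ 1 := inf_le_right
  have key : ∀ (n : ℕ) (u v : A),
      srlS arr a b ^ n ≤ srlS arr u v ↔ u * srlS arr a b ^ n ≤ v ∧ v * srlS arr a b ^ n ≤ u :=
    fun n u v => hA.le_srlS_iff (hA.pow_open hs n) (pow_le_one' hs1 n) u v
  constructor
  · intro H
    obtain ⟨n, hn⟩ := H _ (hA.isCongruence_pow hs hs1) ⟨1, (key 1 a b).1 (pow_one _).le⟩
    exact ⟨n, 0, (key n x y).2 hn⟩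
  · rintro ⟨n, m, h⟩ θ ⟨heq, hinf, -, hmul, harr⟩ hab
    obtain ⟨k, hk⟩ : ∃ k : ℕ, srlS arr a b ^ k ≤ srlS arr x y := by
      cases m with
      | zero => exact ⟨n, h⟩
      | succ m =>
        rw [hA.boxIter_succ (hA.pow_open hs n), ← pow_mul] at h
        exact ⟨_, h⟩
    obtain ⟨hxy, hyx⟩ := (key k x y).1 hk
    have hsθ : θ (srlS arr a b) 1 := by
      have h1 : θ (srlS arr a b) (srlS arr b b) :=
        hinf _ _ _ _ (hinf _ _ _ _ (harr _ _ _ _ hab (heq.refl b))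
          (harr _ _ _ _ (heq.refl b) hab)) (heq.refl 1)
      have h2 : srlS arr b b = 1 := by
        have : 1 ≤ arr b b := by simpa using hA.ax1 b b
        simpa [srlS] using this
      rwa [h2] at h1
    have hpow : ∀ j : ℕ, θ (srlS arr a b ^ j) 1 := by
      intro j
      induction j with
      | zero => simpa using heq.refl 1
      | succ j ih => simpa [pow_succ] using hmul _ _ _ _ ih hsθ
    -- `u` is congruent to `u * s ^ k = (u * s ^ k) ⊓ v`, hence to `u ⊓ v`.
    have meet : ∀ {u v : A}, u * srlS arr a b ^ k ≤ v → θ u (u ⊓ v) := by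
      intro u v huv
      have h1 : θ (u * srlS arr a b ^ k) u := by
        simpa using hmul _ _ _ _ (heq.refl u) (hpow k)
      have h2 := hinf _ _ _ _ h1 (heq.refl v)
      rw [inf_eq_left.2 huv] at h2
      exact heq.trans (heq.symm h1) h2
    have h3 := meet hyx
    rw [inf_comm] at h3
    exact heq.trans (meet hxy) (heq.symm h3)
end

section
/- Let A be an srl-monoid and a, b ∈ A⁻. Then C[a ∧ b] = C[a] ∨ C[b], i.e., the smallest strongly convex subalgebra of A containing a ∧ b is equal to the smallest strongly convex subalgebra of A containing {a, b}. Equivalently, for every x ∈ A: x belongs to every strongly convex subalgebra containing a ∧ b if and only if x belongs to every strongly convex subalgebra containing both a and b. -/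
variable {A : Type*} [Lattice A] [CommMonoid A]

/-- for `a, b` in the negative cone, `C[a ⊓ b] = C[a] ∨ C[b]`: an element
lies in every strongly convex subalgebra containing `a ⊓ b` iff it lies in every
strongly convex subalgebra containing both `a` and `b`. -/
theorem stmt17 {A : Type*} [Lattice A] [CommMonoid A] (arr : A → A → A)
    (hA : IsSRL arr) (a b : A) (ha : a ≤ 1) (hb : b ≤ 1) :
    ∀ x : A,
      (∀ H : Set A, IsStronglyConvexSubalgebra arr H → a ⊓ b ∈ H → x ∈ H) ↔
      (∀ H : Set A, IsStronglyConvexSubalgebra arr H → a ∈ H → b ∈ H → x ∈ H) := by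
  intro x
  constructor
  · intro h H hH haH hbH
    exact h H hH (hH.toConvex.inf_mem a b haH hbH)
  · intro h H hH hab
    -- `a` and `b` lie between `a ⊓ b` and `1`, both of which belong to `H`.
    exact h H hH
      (hH.toConvex.convex _ _ a hab hH.toConvex.one_mem inf_le_left ha)
      (hH.toConvex.convex _ _ b hab hH.toConvex.one_mem inf_le_right hb)
end
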